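/- arXiv:1712.03345 — 3 statements merged into one kernel-verified Lean document; each statement's English description precedes it below -/
import Mathlib

section
/- Let S be a homomorphism of the Fibonacci language L_F. If (S(0), S(1)) is one of the pairs (1,1), (2,1) or (1,2), then S(L_F) = ℕ, the set of all positive integers. -/
/-- `w` is a nonempty finite factor of the infinite word `f`. -/
def IsFactor {A : Type*} (f : ℕ → A) (w : List A) : Prop :=
  w ≠ [] ∧ ∃ i : ℕ, w = (List.range w.length).map fun j => f (i + j)

/-- The golden mean `Φ = (1+√5)/2`. -/
noncomputable def Phi : ℝ := (1 + Real.sqrt 5) / 2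

/-- The Fibonacci word `c(n) = ⌊(n+2)α⌋ − ⌊(n+1)α⌋` with `α = 2 − Φ`. -/
noncomputable def fibWord (n : ℕ) : ℤ :=
  ⌊((n : ℝ) + 2) * (2 - Phi)⌋ - ⌊((n : ℝ) + 1) * (2 - Phi)⌋

/-- The infinite word `0c`: the Fibonacci word prefixed by `0`. -/
noncomputable def fibWord0 (n : ℕ) : ℤ :=
  if n = 0 then 0 else fibWord (n - 1)

/-- The infinite word `1c`: the Fibonacci word prefixed by `1`. -/
noncomputable def fibWord1 (n : ℕ) : ℤ :=
  if n = 0 then 1 else fibWord (n - 1)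

/-- The Fibonacci language: nonempty finite factors of `0c` or of `1c`. -/
def fibLang : Set (List ℤ) :=
  {w | IsFactor fibWord0 w ∨ IsFactor fibWord1 w}

/-- The homomorphism determined by `S0 = S(0)`, `S1 = S(1)`:
`S(w) = N_0(w)·S0 + N_1(w)·S1`. -/
def wordVal01 (S0 S1 : ℕ) (w : List ℤ) : ℕ :=
  w.count 0 * S0 + w.count 1 * S1

/-!
Weigh a letter by its image under `S`, so that every weight is `1` or `2`. The weights of the
prefixes of an infinite word then increase from `0` by steps of `1` or `2`, so for each `m` some
prefix has weight `m` or `m + 1`. If the word starts with a letter of weight `1`, removing this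
letter turns a prefix of weight `m + 1` into a factor of weight `m`. One of the words `0c` and `1c`
starts with such a letter.
-/

section PartialSums

open Finset

variable {v : ℕ → ℕ}

theorem exists_sum_range_eq_or_eq_add_one (hv : ∀ i, v i = 1 ∨ v i = 2) (m : ℕ) :
    ∃ n, ∑ i ∈ range n, v i = m ∨ ∑ i ∈ range n, v i = m + 1 := by
  induction m with
  | zero => exact ⟨0, Or.inl (sum_range_zero v)⟩
  | succ m ih =>
    obtain ⟨n, hn | hn⟩ := ih
    · refine ⟨n + 1, ?_⟩
      rw [sum_range_succ, hn]
      rcases hv n with h | h <;> simp [h, add_assoc]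
    · exact ⟨n, Or.inl hn⟩

theorem exists_sum_range_succ_shift_eq (hv : ∀ i, v i = 1 ∨ v i = 2) (hv0 : v 0 = 1)
    {m : ℕ} (hm : 0 < m) : ∃ i n, ∑ j ∈ range (n + 1), v (i + j) = m := by
  obtain ⟨n, hn | hn⟩ := exists_sum_range_eq_or_eq_add_one hv m
  · obtain _ | n := n
    · simp [hm.ne] at hn
    · exact ⟨0, n, by simpa using hn⟩
  · obtain _ | _ | n := n
    · simp at hn
    · simp [hv0, hm.ne'] at hn
    · refine ⟨1, n, ?_⟩
      rw [sum_range_succ', hv0] at hn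
      simpa only [add_comm 1] using Nat.add_right_cancel hn

end PartialSums

section Factors

variable {A : Type*} {f : ℕ → A} {w : List A} {φ : A → ℕ}

theorem isFactor_map_range_succ (f : ℕ → A) (i n : ℕ) :
    IsFactor f ((List.range (n + 1)).map fun j => f (i + j)) :=
  ⟨by simp, i, by simp⟩

theorem IsFactor.exists_eq_of_mem (hw : IsFactor f w) {a : A} (ha : a ∈ w) : ∃ n, f n = a := by
  obtain ⟨-, i, hi⟩ := hw
  rw [hi] at ha
  obtain ⟨j, -, hj⟩ := List.mem_map.1 ha
  exact ⟨i + j, hj⟩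

theorem IsFactor.sum_map_pos (hw : IsFactor f w) (hφ : ∀ n, 0 < φ (f n)) : 0 < (w.map φ).sum := by
  refine List.sum_pos _ (fun x hx => ?_) (by simpa using hw.1)
  obtain ⟨a, ha, rfl⟩ := List.mem_map.1 hx
  obtain ⟨n, rfl⟩ := hw.exists_eq_of_mem ha
  exact hφ n

theorem exists_isFactor_sum_map_eq (hφ : ∀ n, φ (f n) = 1 ∨ φ (f n) = 2) (hφ0 : φ (f 0) = 1)
    {m : ℕ} (hm : 0 < m) : ∃ w, IsFactor f w ∧ (w.map φ).sum = m := by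
  obtain ⟨i, n, hsum⟩ := exists_sum_range_succ_shift_eq hφ hφ0 hm
  refine ⟨_, isFactor_map_range_succ f i n, ?_⟩
  rw [List.map_map]
  exact hsum

end Factors

section BinaryWords

variable {S0 S1 : ℕ} {f g : ℕ → ℤ}

theorem wordVal01_eq_sum_map (S0 S1 : ℕ) (w : List ℤ) :
    wordVal01 S0 S1 w = (w.map fun a => wordVal01 S0 S1 [a]).sum := by
  induction w with
  | nil => simp [wordVal01]
  | cons a w ih =>
    rw [List.map_cons, List.sum_cons, ← ih]
    simp only [wordVal01, List.count_cons, List.count_nil]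
    ring

theorem wordVal01_singleton_eq_or_eq {a : ℤ} (ha : a = 0 ∨ a = 1) :
    wordVal01 S0 S1 [a] = S0 ∨ wordVal01 S0 S1 [a] = S1 := by
  rcases ha with rfl | rfl <;> simp [wordVal01]

theorem IsFactor.wordVal01_pos {w : List ℤ} (hw : IsFactor f w) (hf : ∀ n, f n = 0 ∨ f n = 1)
    (hS0 : 0 < S0) (hS1 : 0 < S1) : 0 < wordVal01 S0 S1 w := by
  rw [wordVal01_eq_sum_map]
  refine hw.sum_map_pos fun n => ?_
  rcases wordVal01_singleton_eq_or_eq (hf n) with h | h <;> rwa [h]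

theorem exists_isFactor_wordVal01_eq (hf : ∀ n, f n = 0 ∨ f n = 1) (hS0 : S0 = 1 ∨ S0 = 2)
    (hS1 : S1 = 1 ∨ S1 = 2) (hf0 : wordVal01 S0 S1 [f 0] = 1) {m : ℕ} (hm : 0 < m) :
    ∃ w, IsFactor f w ∧ wordVal01 S0 S1 w = m := by
  have hweight (n : ℕ) : wordVal01 S0 S1 [f n] = 1 ∨ wordVal01 S0 S1 [f n] = 2 := by
    rcases wordVal01_singleton_eq_or_eq (hf n) with h | h <;> rwa [h]
  obtain ⟨w, hw, hsum⟩ :=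
    exists_isFactor_sum_map_eq (φ := fun a => wordVal01 S0 S1 [a]) hweight hf0 hm
  exact ⟨w, hw, (wordVal01_eq_sum_map S0 S1 w).trans hsum⟩

theorem fib_image_is_N_easy_general (hf : ∀ n, f n = 0 ∨ f n = 1) (hf0 : f 0 = 0)
    (hg : ∀ n, g n = 0 ∨ g n = 1) (hg0 : g 0 = 1)
    (h : (S0, S1) = (1, 1) ∨ (S0, S1) = (2, 1) ∨ (S0, S1) = (1, 2)) :
    {m : ℕ | ∃ w ∈ {w | IsFactor f w ∨ IsFactor g w}, wordVal01 S0 S1 w = m} =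
      {n : ℕ | 0 < n} := by
  simp only [Prod.mk.injEq] at h
  have hS0 : S0 = 1 ∨ S0 = 2 := by omega
  have hS1 : S1 = 1 ∨ S1 = 2 := by omega
  have hone : S0 = 1 ∨ S1 = 1 := by omega
  ext m
  constructor
  · rintro ⟨w, hw | hw, rfl⟩
    · exact hw.wordVal01_pos hf (by omega) (by omega)
    · exact hw.wordVal01_pos hg (by omega) (by omega)
  · intro hm
    rcases hone with hone | hone
    · have hhead : wordVal01 S0 S1 [f 0] = 1 := by simp [wordVal01, hf0, hone]
      obtain ⟨w, hw, hwm⟩ := exists_isFactor_wordVal01_eq hf hS0 hS1 hhead hm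
      exact ⟨w, Or.inl hw, hwm⟩
    · have hhead : wordVal01 S0 S1 [g 0] = 1 := by simp [wordVal01, hg0, hone]
      obtain ⟨w, hw, hwm⟩ := exists_isFactor_wordVal01_eq hg hS0 hS1 hhead hm
      exact ⟨w, Or.inr hw, hwm⟩

end BinaryWords

theorem floor_add_sub_floor_eq_zero_or_one {R : Type*} [Ring R] [LinearOrder R]
    [IsStrictOrderedRing R] [FloorRing R] (x : R) {a : R} (ha0 : 0 ≤ a) (ha1 : a < 1) :
    ⌊x + a⌋ - ⌊x⌋ = 0 ∨ ⌊x + a⌋ - ⌊x⌋ = 1 := by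
  have ha : ⌊a⌋ = 0 := Int.floor_eq_zero_iff.2 ⟨ha0, ha1⟩
  have hlower := Int.le_floor_add x a
  have hupper := Int.le_floor_add_floor x a
  omega

theorem fibWord_eq_zero_or_one (n : ℕ) : fibWord n = 0 ∨ fibWord n = 1 := by
  have hPhi1 : 1 < Phi := Real.one_lt_goldenRatio
  have hPhi2 : Phi < 2 := Real.goldenRatio_lt_two
  have hsplit : ((n : ℝ) + 2) * (2 - Phi) = ((n : ℝ) + 1) * (2 - Phi) + (2 - Phi) := by ring
  rw [fibWord, hsplit]
  exact floor_add_sub_floor_eq_zero_or_one _ (by linarith) (by linarith)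

theorem fibWord0_eq_zero_or_one : ∀ n, fibWord0 n = 0 ∨ fibWord0 n = 1
  | 0 => Or.inl rfl
  | n + 1 => fibWord_eq_zero_or_one n

theorem fibWord1_eq_zero_or_one : ∀ n, fibWord1 n = 0 ∨ fibWord1 n = 1
  | 0 => Or.inr rfl
  | n + 1 => fibWord_eq_zero_or_one n

theorem fib_image_is_N_easy (S0 S1 : ℕ)
    (h : (S0, S1) = (1, 1) ∨ (S0, S1) = (2, 1) ∨ (S0, S1) = (1, 2)) :
    {m : ℕ | ∃ w ∈ fibLang, wordVal01 S0 S1 w = m} = {n : ℕ | 0 < n} :=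
  fib_image_is_N_easy_general fibWord0_eq_zero_or_one rfl fibWord1_eq_zero_or_one rfl h
end

section
/- Let S be a homomorphism of the Fibonacci language L_F and let E = {(1,1), (1,2), (1,3), (2,1)}. If (S(0), S(1)) ∈ E then ℕ \ S(L_F) is empty; otherwise ℕ \ S(L_F) has infinite cardinality. -/
/-!
The first differences of `⌊nα⌋` and of `⌈nα⌉` form two words over `{0, 1}`, the mechanical words of
slope `α ∈ [0, 1]`; for the Fibonacci slope they are `0c` and `1c`, because `⌈nα⌉ = ⌊nα⌋ + 1` for
irrational `α` and `n ≥ 1`. A factor of length `n` of either of them has sum `⌊nα⌋` or `⌈nα⌉`, and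
the two prefixes of length `n` realise both sums. So a homomorphism `S` takes at most two values on
the factors of length `n`, both at bounded distance from `γn`, where `γ = (1 - α) S₀ + α S₁` is the
mean value of a letter.

If `γ > 2`, or if `γ > 1` and `S₀ = S₁` (one value for each length), these values are too sparse to
leave only finitely many gaps. For `1/3 < α < 1/2` one of the two happens for each pair `(S₀, S₁)`
outside the exceptional set, while for an exceptional pair the values of consecutive lengths
interlock without a gap.
-/

section FloorCeil

variable {R : Type*} [Ring R] [LinearOrder R] [IsOrderedRing R] [FloorRing R]

lemma floor_add_sub_floor (x y : R) : ⌊x + y⌋ - ⌊x⌋ = ⌊y⌋ ∨ ⌊x + y⌋ - ⌊x⌋ = ⌈y⌉ := by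
  have lower := Int.le_floor_add x y
  have upper : ⌊x + y⌋ ≤ ⌊x⌋ + ⌈y⌉ := by
    rw [← Int.floor_add_intCast]
    exact Int.floor_le_floor (add_le_add_right (Int.le_ceil y) x)
  have := Int.ceil_le_floor_add_one y
  omega

lemma ceil_add_sub_ceil (x y : R) : ⌈x + y⌉ - ⌈x⌉ = ⌊y⌋ ∨ ⌈x + y⌉ - ⌈x⌉ = ⌈y⌉ := by
  have upper := Int.ceil_add_le x y
  have lower : ⌈x⌉ + ⌊y⌋ ≤ ⌈x + y⌉ := by
    rw [← Int.ceil_add_intCast]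
    exact Int.ceil_le_ceil (add_le_add_right (Int.floor_le y) x)
  have := Int.ceil_le_floor_add_one y
  omega

lemma floor_add_le_ceil {y : R} (hy : y < 1) (x : R) : ⌊x + y⌋ ≤ ⌈x⌉ := by
  rw [← Int.lt_add_one_iff, Int.floor_lt, Int.cast_add, Int.cast_one]
  exact add_lt_add_of_le_of_lt (Int.le_ceil x) hy

lemma floor_lt_ceil_add {y : R} (hy : 0 < y) (x : R) : ⌊x⌋ < ⌈x + y⌉ :=
  Int.lt_ceil.2 ((Int.floor_le x).trans_lt (lt_add_of_pos_right x hy))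

lemma ceil_eq_floor_add_one_of_lt {y : R} (h0 : 0 ≤ y) (h1 : y + y < 1) {x : R}
    (hx : ⌊x + y⌋ < ⌊x + y + y⌋) : ⌈x⌉ = ⌊x + y⌋ + 1 := by
  refine Int.ceil_eq_iff.2 ⟨?_, ?_⟩
  · have hle : (⌊x + y⌋ : R) + 1 ≤ x + (y + y) := by
      rw [← add_assoc]
      exact_mod_cast Int.le_floor.1 (Int.add_one_le_of_lt hx)
    simpa using lt_of_add_lt_add_right (hle.trans_lt (add_lt_add_right h1 x))
  · exact_mod_cast (le_add_of_nonneg_right h0).trans (Int.lt_floor_add_one (x + y)).le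

end FloorCeil

section Factors

variable {A : Type*} {f : ℕ → A}

lemma isFactor_map_range {n : ℕ} (hn : 0 < n) : IsFactor f ((List.range n).map f) :=
  ⟨by simpa using hn.ne', 0, by simp⟩

lemma IsFactor.mem_range {w : List A} (hw : IsFactor f w) {x : A} (hx : x ∈ w) :
    x ∈ Set.range f := by
  obtain ⟨-, i, hi⟩ := hw
  rw [hi] at hx
  obtain ⟨j, -, rfl⟩ := List.mem_map.1 hx
  exact ⟨i + j, rfl⟩

end Factors

lemma sum_map_range_of_eq_sub {M : Type*} [AddCommGroup M] {f G : ℕ → M}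
    (hf : ∀ n, f n = G (n + 1) - G n) (i n : ℕ) :
    ((List.range n).map fun j => f (i + j)).sum = G (i + n) - G i := by
  induction n with
  | zero => simp
  | succ n ih =>
    rw [List.range_succ, List.map_append, List.sum_append, ih]
    simp [hf, add_assoc]

lemma IsFactor.exists_sum_eq_sub {M : Type*} [AddCommGroup M] {f G : ℕ → M}
    (hf : ∀ n, f n = G (n + 1) - G n) {w : List M} (hw : IsFactor f w) :
    ∃ i : ℕ, w.sum = G (i + w.length) - G i := by
  obtain ⟨-, i, hi⟩ := hw
  refine ⟨i, ?_⟩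
  rw [← sum_map_range_of_eq_sub hf, ← hi]

section MechanicalWords

/-- The lower mechanical word of slope `α` and intercept `0`; for the Fibonacci slope it is the
word `0c`. -/
noncomputable def lowerMechanicalWord (α : ℝ) (n : ℕ) : ℤ :=
  ⌊((n + 1 : ℕ) : ℝ) * α⌋ - ⌊(n : ℝ) * α⌋

/-- The upper mechanical word of slope `α` and intercept `0`; for the Fibonacci slope it is the
word `1c`. -/
noncomputable def upperMechanicalWord (α : ℝ) (n : ℕ) : ℤ :=
  ⌈((n + 1 : ℕ) : ℝ) * α⌉ - ⌈(n : ℝ) * α⌉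

/-- The nonempty finite factors of the two mechanical words of slope `α` and intercept `0`; for
the Fibonacci slope this is the Fibonacci language. -/
def mechanicalLang (α : ℝ) : Set (List ℤ) :=
  {w | IsFactor (lowerMechanicalWord α) w ∨ IsFactor (upperMechanicalWord α) w}

variable {α : ℝ} {w : List ℤ}

lemma length_pos_of_mem_mechanicalLang (hw : w ∈ mechanicalLang α) : 0 < w.length :=
  List.length_pos_iff.2 (hw.elim And.left And.left)

lemma lowerMechanicalWord_eq_floor_or_ceil (α : ℝ) (n : ℕ) :
    lowerMechanicalWord α n = ⌊α⌋ ∨ lowerMechanicalWord α n = ⌈α⌉ := by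
  simpa only [lowerMechanicalWord, Nat.cast_succ, add_one_mul] using floor_add_sub_floor (n * α) α

lemma upperMechanicalWord_eq_floor_or_ceil (α : ℝ) (n : ℕ) :
    upperMechanicalWord α n = ⌊α⌋ ∨ upperMechanicalWord α n = ⌈α⌉ := by
  simpa only [upperMechanicalWord, Nat.cast_succ, add_one_mul] using ceil_add_sub_ceil (n * α) α

lemma eq_floor_or_ceil_of_mem_mechanicalLang (hw : w ∈ mechanicalLang α) {x : ℤ} (hx : x ∈ w) :
    x = ⌊α⌋ ∨ x = ⌈α⌉ := by
  rcases hw with hw | hw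
  · obtain ⟨n, rfl⟩ := hw.mem_range hx
    exact lowerMechanicalWord_eq_floor_or_ceil α n
  · obtain ⟨n, rfl⟩ := hw.mem_range hx
    exact upperMechanicalWord_eq_floor_or_ceil α n

lemma eq_zero_or_one_of_mem_mechanicalLang (h0 : 0 ≤ α) (h1 : α ≤ 1) (hw : w ∈ mechanicalLang α)
    {x : ℤ} (hx : x ∈ w) : x = 0 ∨ x = 1 := by
  have hfloor : 0 ≤ ⌊α⌋ := Int.floor_nonneg.2 h0
  have hceil : ⌈α⌉ ≤ 1 := Int.ceil_le.2 (by simpa)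
  have := Int.floor_le_ceil α
  have := eq_floor_or_ceil_of_mem_mechanicalLang hw hx
  omega

lemma sum_eq_floor_or_ceil_of_mem_mechanicalLang (hw : w ∈ mechanicalLang α) :
    w.sum = ⌊w.length * α⌋ ∨ w.sum = ⌈w.length * α⌉ := by
  rcases hw with hw | hw
  · obtain ⟨i, hi⟩ := hw.exists_sum_eq_sub (G := fun n : ℕ => ⌊n * α⌋) fun _ => rfl
    simpa only [hi, Nat.cast_add, add_mul] using floor_add_sub_floor (i * α) (w.length * α)
  · obtain ⟨i, hi⟩ := hw.exists_sum_eq_sub (G := fun n : ℕ => ⌈n * α⌉) fun _ => rfl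
    simpa only [hi, Nat.cast_add, add_mul] using ceil_add_sub_ceil (i * α) (w.length * α)

lemma exists_mem_mechanicalLang_sum_eq {n : ℕ} (hn : 0 < n) {k : ℤ}
    (hk : k = ⌊n * α⌋ ∨ k = ⌈n * α⌉) : ∃ w ∈ mechanicalLang α, w.length = n ∧ w.sum = k := by
  rcases hk with rfl | rfl
  · refine ⟨_, Or.inl (isFactor_map_range hn), by simp, ?_⟩
    simpa using sum_map_range_of_eq_sub (f := lowerMechanicalWord α)
      (G := fun n : ℕ => ⌊n * α⌋) (fun _ => rfl) 0 n
  · refine ⟨_, Or.inr (isFactor_map_range hn), by simp, ?_⟩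
    simpa using sum_map_range_of_eq_sub (f := upperMechanicalWord α)
      (G := fun n : ℕ => ⌈n * α⌉) (fun _ => rfl) 0 n

end MechanicalWords

section Values

/-- The value `N₀ S0 + N₁ S1` of a binary word in terms of its length `n = N₀ + N₁` and its sum
`k = N₁`. -/
def binaryValue (S0 S1 n k : ℤ) : ℤ :=
  (n - k) * S0 + k * S1

/-- The values taken by the homomorphism on the words of length `n` of `mechanicalLang α`. -/
noncomputable def mechanicalValues (α : ℝ) (S0 S1 : ℤ) (n : ℕ) : Finset ℤ :=
  {binaryValue S0 S1 n ⌊n * α⌋, binaryValue S0 S1 n ⌈n * α⌉}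

lemma mem_mechanicalValues {α : ℝ} {S0 S1 m : ℤ} {n : ℕ} :
    m ∈ mechanicalValues α S0 S1 n ↔
      m = binaryValue S0 S1 n ⌊n * α⌋ ∨ m = binaryValue S0 S1 n ⌈n * α⌉ := by
  simp [mechanicalValues]

lemma card_mechanicalValues_le_two (α : ℝ) (S0 S1 : ℤ) (n : ℕ) :
    (mechanicalValues α S0 S1 n).card ≤ 2 :=
  Finset.card_le_two

lemma card_mechanicalValues_self_le_one (α : ℝ) (S : ℤ) (n : ℕ) :
    (mechanicalValues α S S n).card ≤ 1 := by
  simp [mechanicalValues, binaryValue, ← add_mul]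

lemma wordVal01_eq_binaryValue (S0 S1 : ℕ) {w : List ℤ} (hw : ∀ x ∈ w, x = 0 ∨ x = 1) :
    (wordVal01 S0 S1 w : ℤ) = binaryValue S0 S1 w.length w.sum := by
  have counts : (w.count 0 : ℤ) = w.length - w.sum ∧ (w.count 1 : ℤ) = w.sum := by
    induction w with
    | nil => simp
    | cons x w ih =>
      obtain ⟨hx, hmem⟩ := List.forall_mem_cons.1 hw
      obtain ⟨count_zero, count_one⟩ := ih hmem
      rcases hx with rfl | rfl <;> grind
  simp [wordVal01, binaryValue, counts]

lemma exists_mem_mechanicalLang_wordVal01_eq_iff {α : ℝ} (h0 : 0 ≤ α) (h1 : α ≤ 1)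
    {S0 S1 m : ℕ} :
    (∃ w ∈ mechanicalLang α, wordVal01 S0 S1 w = m) ↔
      ∃ n : ℕ, 0 < n ∧ (m : ℤ) ∈ mechanicalValues α S0 S1 n := by
  have value {w} (hw : w ∈ mechanicalLang α) :=
    wordVal01_eq_binaryValue S0 S1 fun _ => eq_zero_or_one_of_mem_mechanicalLang h0 h1 hw
  constructor
  · rintro ⟨w, hw, rfl⟩
    refine ⟨w.length, length_pos_of_mem_mechanicalLang hw, ?_⟩
    rw [mem_mechanicalValues, value hw]
    exact (sum_eq_floor_or_ceil_of_mem_mechanicalLang hw).imp (congrArg _) (congrArg _)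
  · rintro ⟨n, hn, hm⟩
    obtain ⟨k, hk, hmk⟩ : ∃ k, (k = ⌊n * α⌋ ∨ k = ⌈n * α⌉) ∧ (m : ℤ) = binaryValue S0 S1 n k := by
      simpa only [or_and_right, exists_or, exists_eq_left] using mem_mechanicalValues.1 hm
    obtain ⟨w, hw, rfl, rfl⟩ := exists_mem_mechanicalLang_sum_eq hn hk
    exact ⟨w, hw, by exact_mod_cast (value hw).trans hmk.symm⟩

end Values

section Covering

lemma exists_mem_Ico_of_lt_succ {a : ℕ → ℤ} (ha : ∀ n, a n < a (n + 1)) {k : ℕ} {m : ℤ}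
    (hm : a k ≤ m) : ∃ n, k ≤ n ∧ m ∈ Set.Ico (a n) (a (n + 1)) := by
  induction m, hm using Int.leInduction with
  | base => exact ⟨k, le_rfl, le_rfl, ha k⟩
  | succ m _ ih =>
    obtain ⟨n, hkn, hnm, hmn⟩ := ih
    rcases (Int.add_one_le_of_lt hmn).lt_or_eq with hlt | heq
    · exact ⟨n, hkn, by omega, hlt⟩
    · exact ⟨n + 1, by omega, heq.ge, heq ▸ ha (n + 1)⟩

variable {α : ℝ} {m : ℤ}

lemma exists_mem_mechanicalValues_one_one (hm : 0 < m) :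
    ∃ n : ℕ, 0 < n ∧ m ∈ mechanicalValues α 1 1 n :=
  ⟨m.toNat, by omega, by simp [mem_mechanicalValues, binaryValue, hm.le]⟩

lemma exists_add_mul_floor_le_and_lt (h0 : 0 ≤ α) (h1 : α < 1) {c : ℤ} (hc : 0 ≤ c) (hm : 0 < m) :
    ∃ n : ℕ, 0 < n ∧ n + c * ⌊n * α⌋ ≤ m ∧ m < n + 1 + c * ⌊n * α + α⌋ := by
  have hmono (n : ℕ) : c * ⌊n * α⌋ ≤ c * ⌊n * α + α⌋ := by gcongr; linarith
  obtain ⟨n, hn, hle, hlt⟩ := exists_mem_Ico_of_lt_succ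
    (a := fun n => n + c * ⌊n * α⌋) (k := 1) (m := m)
    (fun n => by have := hmono n; push_cast [add_one_mul]; omega)
    (by simpa [Int.floor_eq_zero_iff.2 ⟨h0, h1⟩] using Int.add_one_le_of_lt hm)
  exact ⟨n, hn, hle, by simpa only [Nat.cast_succ, add_one_mul] using hlt⟩

lemma exists_mem_mechanicalValues_one_two (h0 : 0 ≤ α) (h1 : α < 1) (hm : 0 < m) :
    ∃ n : ℕ, 0 < n ∧ m ∈ mechanicalValues α 1 2 n := by
  obtain ⟨n, hn, hle, hlt⟩ := exists_add_mul_floor_le_and_lt h0 h1 zero_le_one hm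
  refine ⟨n, hn, ?_⟩
  have hstep := floor_add_le_ceil h1 (n * α)
  have := Int.ceil_le_floor_add_one (n * α)
  simp only [mem_mechanicalValues, binaryValue]
  omega

lemma exists_mem_mechanicalValues_two_one (h0 : 0 < α) (h1 : α ≤ 1) (hm : 0 < m) :
    ∃ n : ℕ, 0 < n ∧ m ∈ mechanicalValues α 2 1 n := by
  have hstep (n : ℕ) : ⌈(n + 1) * α⌉ ≤ ⌈n * α⌉ + 1 := by
    rw [add_one_mul, ← Int.ceil_add_one]
    gcongr
  have hone : ⌈α⌉ = 1 := Int.ceil_eq_iff.2 ⟨by simpa, by simpa⟩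
  obtain ⟨n, hn, hle, hlt⟩ := exists_mem_Ico_of_lt_succ
    (a := fun n => 2 * n - ⌈n * α⌉) (k := 1) (m := m)
    (fun n => by have := hstep n; push_cast; omega)
    (by rw [Nat.cast_one, Nat.cast_one, one_mul, hone]; omega)
  refine ⟨n, hn, ?_⟩
  have hstep' := floor_lt_ceil_add h0 (n * α)
  have := Int.ceil_le_floor_add_one (n * α)
  simp only [Nat.cast_succ, add_one_mul] at hlt
  simp only [mem_mechanicalValues, binaryValue]
  omega

lemma exists_mem_mechanicalValues_one_three (h0 : 0 ≤ α) (h1 : α < 1 / 2) (hm : 0 < m) :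
    ∃ n : ℕ, 0 < n ∧ m ∈ mechanicalValues α 1 3 n := by
  have hα : α < 1 := h1.trans one_half_lt_one
  obtain ⟨n, hn, hle, hlt⟩ := exists_add_mul_floor_le_and_lt h0 hα zero_le_two hm
  have hstep := floor_add_le_ceil hα (n * α)
  have := Int.ceil_le_floor_add_one (n * α)
  by_cases hmid : m = n + 2 * ⌊n * α⌋ + 1
  · -- The value between the two of length `n` is the larger of the two of length `n - 1`.
    obtain ⟨l, rfl⟩ := Nat.exists_eq_add_of_le' hn
    simp only [Nat.cast_succ, add_one_mul] at hmid hlt hstep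
    have hceil := ceil_eq_floor_add_one_of_lt h0 (by linarith) (x := l * α) (by omega)
    have hfloor : 0 ≤ ⌊l * α + α⌋ := Int.floor_nonneg.2 (by positivity)
    have hl : l ≠ 0 := by
      rintro rfl
      simp only [Nat.cast_zero, zero_mul, Int.ceil_zero] at hceil hfloor
      omega
    refine ⟨l, Nat.pos_of_ne_zero hl, ?_⟩
    simp only [mem_mechanicalValues, binaryValue]
    omega
  · refine ⟨n, hn, ?_⟩
    simp only [mem_mechanicalValues, binaryValue]
    omega

end Covering

section Gaps

variable {s : ℕ → Finset ℤ} {k : ℕ} {γ C : ℝ}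

lemma natFloor_le_card_add_mul (hγ : 0 ≤ γ) (hcard : ∀ n, (s n).card ≤ k)
    (hlower : ∀ n, ∀ x ∈ s n, n * γ ≤ x + C) (hfin : {m : ℕ | ∀ n, (m : ℤ) ∉ s n}.Finite)
    (L : ℕ) : ⌊L * γ - C⌋₊ ≤ hfin.toFinset.card + L * k := by
  have hsub : (Finset.range ⌊L * γ - C⌋₊).image Nat.cast ⊆
      hfin.toFinset.image Nat.cast ∪ (Finset.range L).biUnion s := by
    refine Finset.image_subset_iff.2 fun m hm => ?_
    by_cases hms : ∀ n, (m : ℤ) ∉ s n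
    · exact Finset.mem_union_left _ (Finset.mem_image_of_mem _ (hfin.mem_toFinset.2 hms))
    · push Not at hms
      obtain ⟨n, hn⟩ := hms
      have hmul : n * γ < L * γ := by
        have := Nat.lt_of_lt_floor (Finset.mem_range.1 hm)
        have := hlower n m hn
        push_cast at this
        linarith
      have hnL : n < L := by exact_mod_cast lt_of_mul_lt_mul_right hmul hγ
      exact Finset.mem_union_right _ (Finset.mem_biUnion.2 ⟨n, Finset.mem_range.2 hnL, hn⟩)
  calc
    ⌊L * γ - C⌋₊ = ((Finset.range ⌊L * γ - C⌋₊).image (Nat.cast : ℕ → ℤ)).card := by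
      rw [Finset.card_image_of_injective _ Nat.cast_injective, Finset.card_range]
    _ ≤ (hfin.toFinset.image (Nat.cast : ℕ → ℤ)).card + ((Finset.range L).biUnion s).card :=
      (Finset.card_le_card hsub).trans (Finset.card_union_le _ _)
    _ ≤ hfin.toFinset.card + L * k := by
      gcongr
      · exact Finset.card_image_le
      · simpa using Finset.card_biUnion_le_card_mul (Finset.range L) s k fun n _ => hcard n

lemma infinite_setOf_forall_notMem_of_card_le (hk : k < γ) (hcard : ∀ n, (s n).card ≤ k)
    (hlower : ∀ n, ∀ x ∈ s n, n * γ ≤ x + C) : {m : ℕ | ∀ n, (m : ℤ) ∉ s n}.Infinite := by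
  intro hfin
  have hbound (L : ℕ) : L * γ - C < hfin.toFinset.card + L * k + 1 := calc
    L * γ - C < ⌊L * γ - C⌋₊ + 1 := Nat.lt_floor_add_one _
    _ ≤ hfin.toFinset.card + L * k + 1 := by
      have hγ : 0 ≤ γ := (Nat.cast_nonneg k).trans hk.le
      exact_mod_cast Nat.succ_le_succ (natFloor_le_card_add_mul hγ hcard hlower hfin L)
  obtain ⟨L, hL⟩ := exists_nat_gt ((hfin.toFinset.card + C + 1) / (γ - k))
  rw [div_lt_iff₀ (sub_pos.2 hk)] at hL
  linarith [hbound L]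

/-- The mean value of a letter in a mechanical word of slope `α`, in which `1` has density `α`. -/
def letterMean (α : ℝ) (S0 S1 : ℤ) : ℝ :=
  (1 - α) * S0 + α * S1

variable {α : ℝ}

lemma abs_sub_letterMean_le {S0 S1 x : ℤ} {n : ℕ} (hx : x ∈ mechanicalValues α S0 S1 n) :
    |x - n * letterMean α S0 S1| ≤ |(S1 - S0 : ℝ)| := by
  have hdev (k : ℤ) (hk : |k - n * α| ≤ 1) :
      |binaryValue S0 S1 n k - n * letterMean α S0 S1| ≤ |(S1 - S0 : ℝ)| := calc
    _ = |k - n * α| * |(S1 - S0 : ℝ)| := by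
      rw [← abs_mul, binaryValue, letterMean]; push_cast; ring_nf
    _ ≤ _ := mul_le_of_le_one_left (abs_nonneg _) hk
  rcases mem_mechanicalValues.1 hx with rfl | rfl
  · refine hdev _ (abs_le.2 ⟨?_, ?_⟩)
    · linarith [Int.lt_floor_add_one (n * α)]
    · linarith [Int.floor_le (n * α)]
  · refine hdev _ (abs_le.2 ⟨?_, ?_⟩)
    · linarith [Int.le_ceil (n * α)]
    · linarith [Int.ceil_lt_add_one (n * α)]

lemma infinite_setOf_forall_notMem_mechanicalValues {S0 S1 : ℤ}
    (hk : k < letterMean α S0 S1) (hcard : ∀ n, (mechanicalValues α S0 S1 n).card ≤ k) :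
    {m : ℕ | ∀ n, (m : ℤ) ∉ mechanicalValues α S0 S1 n}.Infinite :=
  infinite_setOf_forall_notMem_of_card_le (C := |(S1 - S0 : ℝ)|) hk hcard fun n x hx => by
    linarith [(abs_le.1 (abs_sub_letterMean_le hx)).1]

lemma two_lt_letterMean (h0 : 1 / 3 < α) (h1 : α < 1 / 2) {S0 S1 : ℕ} (hS0 : 0 < S0)
    (hS1 : 0 < S1) (hne : S0 ≠ S1)
    (hE : (S0, S1) ∉ ({(1, 1), (1, 2), (1, 3), (2, 1)} : Set (ℕ × ℕ))) :
    2 < letterMean α S0 S1 := by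
  have hcases : (1 ≤ S0 ∧ 4 ≤ S1) ∨ (2 ≤ S0 ∧ 3 ≤ S1) ∨ (3 ≤ S0 ∧ 1 ≤ S1) := by
    simp only [Set.mem_insert_iff, Set.mem_singleton_iff, Prod.mk.injEq] at hE
    omega
  have hmono {a b : ℕ} (h : a ≤ S0 ∧ b ≤ S1) : (1 - α) * a + α * b ≤ letterMean α S0 S1 := by
    have ha : (a : ℝ) ≤ S0 := by exact_mod_cast h.1
    have hb : (b : ℝ) ≤ S1 := by exact_mod_cast h.2
    have : 0 ≤ 1 - α := by linarith
    have : 0 ≤ α := by linarith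
    simp only [letterMean, Int.cast_natCast]
    gcongr
  rcases hcases with h | h | h <;> refine lt_of_lt_of_le ?_ (hmono h) <;> push_cast <;> linarith

end Gaps

section ZeroInfinityLaw

variable {α : ℝ} {S0 S1 : ℕ}

lemma exists_mem_mechanicalLang_wordVal01_eq (h0 : 0 < α) (h1 : α < 1 / 2)
    (hE : (S0, S1) ∈ ({(1, 1), (1, 2), (1, 3), (2, 1)} : Set (ℕ × ℕ))) {m : ℕ} (hm : 0 < m) :
    ∃ w ∈ mechanicalLang α, wordVal01 S0 S1 w = m := by
  have hα : α < 1 := by linarith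
  rw [exists_mem_mechanicalLang_wordVal01_eq_iff h0.le hα.le]
  have hm : (0 : ℤ) < m := by exact_mod_cast hm
  simp only [Set.mem_insert_iff, Set.mem_singleton_iff, Prod.mk.injEq] at hE
  rcases hE with ⟨rfl, rfl⟩ | ⟨rfl, rfl⟩ | ⟨rfl, rfl⟩ | ⟨rfl, rfl⟩
  · exact exists_mem_mechanicalValues_one_one hm
  · exact exists_mem_mechanicalValues_one_two h0.le hα hm
  · exact exists_mem_mechanicalValues_one_three h0.le h1 hm
  · exact exists_mem_mechanicalValues_two_one h0 hα.le hm

lemma infinite_setOf_not_exists_mem_mechanicalLang (h0 : 1 / 3 < α) (h1 : α < 1 / 2)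
    (hS0 : 0 < S0) (hS1 : 0 < S1)
    (hE : (S0, S1) ∉ ({(1, 1), (1, 2), (1, 3), (2, 1)} : Set (ℕ × ℕ))) :
    {m : ℕ | ¬∃ w ∈ mechanicalLang α, wordVal01 S0 S1 w = m}.Infinite := by
  have hinf : {m : ℕ | ∀ n, (m : ℤ) ∉ mechanicalValues α S0 S1 n}.Infinite := by
    rcases eq_or_ne S0 S1 with rfl | hne
    · refine infinite_setOf_forall_notMem_mechanicalValues ?_
        (card_mechanicalValues_self_le_one α S0)
      have : S0 ≠ 1 := by rintro rfl; simp at hE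
      have : (1 : ℝ) < S0 := by exact_mod_cast (show 1 < S0 by omega)
      simpa [letterMean, ← add_mul]
    · exact infinite_setOf_forall_notMem_mechanicalValues
        (two_lt_letterMean h0 h1 hS0 hS1 hne hE) (card_mechanicalValues_le_two α S0 S1)
  refine hinf.mono fun m hm => ?_
  rw [Set.mem_ofPred_eq, exists_mem_mechanicalLang_wordVal01_eq_iff (by linarith) (by linarith)]
  rintro ⟨n, -, hn⟩
  exact hm n hn

end ZeroInfinityLaw

theorem fib_zero_infinity_law_general {α : ℝ} (h0 : 1 / 3 < α) (h1 : α < 1 / 2)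
    (S0 S1 : ℕ) (hS0 : 0 < S0) (hS1 : 0 < S1) :
    (((S0, S1) ∈ ({(1, 1), (1, 2), (1, 3), (2, 1)} : Set (ℕ × ℕ))) →
      {n : ℕ | 0 < n ∧ n ∉ {m : ℕ | ∃ w ∈ mechanicalLang α, wordVal01 S0 S1 w = m}} = ∅) ∧
    (((S0, S1) ∉ ({(1, 1), (1, 2), (1, 3), (2, 1)} : Set (ℕ × ℕ))) →
      {n : ℕ | 0 < n ∧ n ∉ {m : ℕ | ∃ w ∈ mechanicalLang α, wordVal01 S0 S1 w = m}}.Infinite) := by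
  refine ⟨fun hE => ?_, fun hE => ?_⟩
  · refine Set.eq_empty_of_forall_notMem fun m ⟨hm, hmE⟩ => hmE ?_
    exact exists_mem_mechanicalLang_wordVal01_eq (by linarith) h1 hE hm
  · have hinf := infinite_setOf_not_exists_mem_mechanicalLang h0 h1 hS0 hS1 hE
    refine (hinf.sdiff (Set.finite_singleton 0)).mono ?_
    rintro m ⟨hm, hm0⟩
    exact ⟨Nat.pos_of_ne_zero hm0, hm⟩

section Fibonacci

lemma two_sub_Phi_mem_Ioo : 2 - Phi ∈ Set.Ioo (1 / 3) (1 / 2) := by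
  have hlower : 2 < √5 := Real.lt_sqrt_of_sq_lt (by norm_num)
  have hupper : √5 < 7 / 3 := (Real.sqrt_lt' (by norm_num)).2 (by norm_num)
  constructor <;> unfold Phi <;> linarith

lemma irrational_two_sub_Phi : Irrational (2 - Phi) :=
  mod_cast Real.goldenRatio_irrational.natCast_sub 2

lemma ceil_eq_floor_add_one_of_irrational {x : ℝ} (hx : Irrational x) : ⌈x⌉ = ⌊x⌋ + 1 := by
  refine (Int.ceil_eq_floor_add_one_iff_notMem x).2 ?_
  rintro ⟨k, rfl⟩
  exact k.not_irrational hx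

lemma fibWord_eq_lowerMechanicalWord (n : ℕ) :
    fibWord n = lowerMechanicalWord (2 - Phi) (n + 1) := by
  simp [fibWord, lowerMechanicalWord, add_assoc, one_add_one_eq_two]

lemma fibWord_eq_upperMechanicalWord (n : ℕ) :
    fibWord n = upperMechanicalWord (2 - Phi) (n + 1) := by
  have hceil (k : ℕ) :=
    ceil_eq_floor_add_one_of_irrational (irrational_two_sub_Phi.natCast_mul k.succ_ne_zero)
  rw [fibWord_eq_lowerMechanicalWord, lowerMechanicalWord, upperMechanicalWord, hceil, hceil]
  ring

lemma fibWord0_eq_lowerMechanicalWord : fibWord0 = lowerMechanicalWord (2 - Phi) := by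
  have hfloor : ⌊2 - Phi⌋ = 0 := by
    obtain ⟨h0, h1⟩ := two_sub_Phi_mem_Ioo
    exact Int.floor_eq_zero_iff.2 ⟨by linarith, by linarith⟩
  funext n
  cases n with
  | zero => simp [fibWord0, lowerMechanicalWord, hfloor]
  | succ n => simp [fibWord0, fibWord_eq_lowerMechanicalWord]

lemma fibWord1_eq_upperMechanicalWord : fibWord1 = upperMechanicalWord (2 - Phi) := by
  have hceil : ⌈2 - Phi⌉ = 1 := by
    obtain ⟨h0, h1⟩ := two_sub_Phi_mem_Ioo
    exact Int.ceil_eq_iff.2 ⟨by push_cast; linarith, by push_cast; linarith⟩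
  funext n
  cases n with
  | zero => simp [fibWord1, upperMechanicalWord, hceil]
  | succ n => simp [fibWord1, fibWord_eq_upperMechanicalWord]

lemma fibLang_eq_mechanicalLang : fibLang = mechanicalLang (2 - Phi) := by
  rw [fibLang, mechanicalLang, fibWord0_eq_lowerMechanicalWord, fibWord1_eq_upperMechanicalWord]

end Fibonacci

theorem fib_zero_infinity_law (S0 S1 : ℕ) (hS0 : 0 < S0) (hS1 : 0 < S1) :
    (((S0, S1) ∈ ({(1, 1), (1, 2), (1, 3), (2, 1)} : Set (ℕ × ℕ))) →
      {n : ℕ | 0 < n ∧ n ∉ {m : ℕ | ∃ w ∈ fibLang, wordVal01 S0 S1 w = m}} = ∅) ∧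
    (((S0, S1) ∉ ({(1, 1), (1, 2), (1, 3), (2, 1)} : Set (ℕ × ℕ))) →
      {n : ℕ | 0 < n ∧ n ∉ {m : ℕ | ∃ w ∈ fibLang, wordVal01 S0 S1 w = m}}.Infinite) := by
  rw [fibLang_eq_mechanicalLang]
  exact fib_zero_infinity_law_general two_sub_Phi_mem_Ioo.1 two_sub_Phi_mem_Ioo.2 S0 S1 hS0 hS1
end

section
/- Let Φ = (1+√5)/2. The three sets {2⌊nΦ⌋ − n : n ≥ 1}, {2⌊nΦ⌋ − n + 2 : n ≥ 1} and {4⌊nΦ⌋ + 3n + 2 : n ≥ 0} form a complementary triple: they are pairwise disjoint and their union is the set of all positive integers. In particular, for the homomorphism S of the Fibonacci language L_F with S(0) = 3 and S(1) = 1, one has S(L_F) = {2⌊nΦ⌋ − n : n ≥ 1} ∪ {2⌊nΦ⌋ − n + 2 : n ≥ 1} and ℕ \ S(L_F) = {4⌊nΦ⌋ + 3n + 2 : n ≥ 0}. -/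
/-!
Put `s = 2β − 1 > 2`. Then `m = 2⌊nβ⌋ − n` means that `n ≡ m` mod 2 and `ns ∈ [m, m + 2)`, and
`m = 2⌊nβ⌋ − n + 2` means that `n ≡ m` mod 2 and `ns ∈ [m − 2, m)`. As `n` runs through a parity
class, the multiples `ns` are spaced by `2s > 4`, so at most one of them falls in the window
`(m − 2, m + 2)`. If none does, the window lies in a gap `ns ≤ m − 2 < m + 2 < (n + 2)s`. For
`k = m − 2 − 2n` this says that `n` is the greatest integer of the parity of `k` with
`n ≤ k / (s − 2) = k(2γ + 1)`, that is, `n = 2⌊kγ⌋ + k`, whence `m = 4⌊kγ⌋ + 3k + 2`.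
For `β = Φ` one has `s = √5` and `1 / (√5 − 2) = √5 + 2`, so `γ = Φ` as well.

The factors of length `k` of the Sturmian language of slope `θ` contain `⌊kθ⌋` or `⌊kθ⌋ + 1`
letters `1`, and the prefixes of its words `0c` and `1c` attain both values; for `θ = 2 − β` this
turns the values of `S` into the first two sequences.
-/

/-- The values `2⌊nβ⌋ − n` with `n ≥ 1`: the smaller of the two values that `S` takes on the words
of length `n` of the Sturmian language of slope `2 − β`, when `S(0) = 3` and `S(1) = 1`. -/
def lowerValues (β : ℝ) : Set ℤ :=
  {m | ∃ n : ℕ, 1 ≤ n ∧ m = 2 * ⌊(n : ℝ) * β⌋ - n}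

/-- The values `2⌊nβ⌋ − n + 2` with `n ≥ 1`, the larger value in each of the pairs described at
`lowerValues`. -/
def upperValues (β : ℝ) : Set ℤ :=
  {m | ∃ n : ℕ, 1 ≤ n ∧ m = 2 * ⌊(n : ℝ) * β⌋ - n + 2}

/-- The values `4⌊nγ⌋ + 3n + 2` with `n ≥ 0`. If `(2β − 3)(2γ + 1) = 1`, they are the positive
integers in neither `lowerValues β` nor `upperValues β`. -/
def gapValues (γ : ℝ) : Set ℤ :=
  {m | ∃ n : ℕ, m = 4 * ⌊(n : ℝ) * γ⌋ + 3 * n + 2}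

/-- The word `af`, that is, `f` prefixed by the letter `a`. -/
def prefixWord {A : Type*} (a : A) (f : ℕ → A) (n : ℕ) : A :=
  if n = 0 then a else f (n - 1)

/-- The characteristic word of slope `θ`; the Fibonacci word is the case `θ = 2 − Φ`. -/
noncomputable def charWord (θ : ℝ) (n : ℕ) : ℤ :=
  ⌊((n : ℝ) + 2) * θ⌋ - ⌊((n : ℝ) + 1) * θ⌋

/-- The Sturmian language of slope `θ`: the nonempty finite factors of the characteristic word of
slope `θ` prefixed by `0` or by `1`. The Fibonacci language is the case `θ = 2 − Φ`. -/
def charLang (θ : ℝ) : Set (List ℤ) :=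
  {w | IsFactor (prefixWord 0 (charWord θ)) w ∨ IsFactor (prefixWord 1 (charWord θ)) w}

section Floor

variable {K : Type*} [Field K] [LinearOrder K] [IsStrictOrderedRing K] [FloorRing K]

theorem floor_add_eq_or (x y : K) : ⌊x + y⌋ = ⌊x⌋ + ⌊y⌋ ∨ ⌊x + y⌋ = ⌊x⌋ + ⌊y⌋ + 1 := by
  have := Int.le_floor_add x y
  have := Int.le_floor_add_floor x y
  omega

theorem two_mul_floor_eq_iff {x : K} {a : ℤ} :
    2 * ⌊x⌋ = a ↔ Even a ∧ (a : K) ≤ 2 * x ∧ 2 * x < a + 2 := by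
  constructor
  · rintro rfl
    push_cast
    exact ⟨even_two_mul _, by linarith [Int.floor_le x], by linarith [Int.lt_floor_add_one x]⟩
  · rintro ⟨⟨b, rfl⟩, hle, hlt⟩
    push_cast at hle hlt
    have hb : ⌊x⌋ = b := Int.floor_eq_iff.2 ⟨by linarith, by linarith⟩
    rw [hb, two_mul]

theorem exists_even_add_le_lt (m : ℤ) (x : K) :
    ∃ n : ℤ, Even (m + n) ∧ (n : K) ≤ x ∧ x < n + 2 := by
  obtain ⟨-, hle, hlt⟩ := two_mul_floor_eq_iff.1 (Eq.refl (2 * ⌊(x + m) / 2⌋))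
  refine ⟨2 * ⌊(x + m) / 2⌋ - m, by simp, ?_, ?_⟩ <;> push_cast at * <;> linarith

end Floor

section Approximation

variable {K : Type*} [Field K] [LinearOrder K] [IsStrictOrderedRing K] {s : K} {m n p : ℤ}

theorem eq_of_abs_mul_sub_lt_two (hs : 2 ≤ s) (hn : Even (m + n)) (hp : Even (m + p))
    (hns : |n * s - m| < 2) (hps : |p * s - m| < 2) : n = p := by
  rw [abs_lt] at hns hps
  have not_add_two_le {a b : ℤ} (ha : -2 < a * s - m) (hb : b * s - m < 2) : ¬ a + 2 ≤ b := by
    intro hab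
    have hab' : (a : K) + 2 ≤ b := by exact_mod_cast hab
    nlinarith
  have hnp := not_add_two_le hns.1 hps.2
  have hpn := not_add_two_le hps.1 hns.2
  grind

theorem not_abs_mul_sub_lt_two_of_gap (hs : 0 ≤ s) (hn : Even (m + n)) (hp : Even (m + p))
    (hle : n * s ≤ m - 2) (hlt : m + 2 < (n + 2) * s) : ¬ |p * s - m| < 2 := by
  intro habs
  rw [abs_lt] at habs
  obtain hpn | hnp : p ≤ n ∨ n + 2 ≤ p := by grind
  · have : (p : K) ≤ n := by exact_mod_cast hpn
    nlinarith
  · have : (n : K) + 2 ≤ p := by exact_mod_cast hnp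
    nlinarith

theorem exists_abs_mul_sub_lt_two_or_gap {s : ℝ} (hs : Irrational s) (hs1 : 1 ≤ s) (hm : 0 < m) :
    (∃ n : ℤ, 1 ≤ n ∧ Even (m + n) ∧ |n * s - m| < 2) ∨
      ∃ n : ℤ, Even (m + n) ∧ n * s ≤ m - 2 ∧ m + 2 < (n + 2) * s := by
  obtain ⟨n, heven, hle, hlt⟩ := exists_even_add_le_lt m ((m - 2) / s)
  have hs0 : 0 < s := by linarith
  rw [le_div_iff₀ hs0] at hle
  rw [div_lt_iff₀ hs0] at hlt
  rcases lt_or_ge ((m : ℝ) + 2) ((n + 2) * s) with hgap | hnear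
  · exact Or.inr ⟨n, heven, hle, hgap⟩
  have hpos : 1 ≤ n + 2 := by
    by_contra! hn
    have hm' : (1 : ℝ) ≤ m := by exact_mod_cast hm
    obtain hn0 | hn1 : n + 2 = 0 ∨ n + 2 ≤ -1 := by omega
    · have hm2 : (2 : ℝ) ≤ m := by exact_mod_cast (by grind : 2 ≤ m)
      have : (n : ℝ) + 2 = 0 := by exact_mod_cast hn0
      rw [this] at hlt
      linarith
    · have : (n : ℝ) + 2 ≤ -1 := by exact_mod_cast hn1
      nlinarith
  have hne : ((n + 2 : ℤ) : ℝ) * s ≠ (m + 2 : ℤ) := (hs.intCast_mul (by omega)).ne_int _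
  push_cast at hne
  refine Or.inl ⟨n + 2, hpos, by grind, abs_lt.2 ⟨?_, ?_⟩⟩ <;> push_cast
  · linarith
  · linarith [lt_of_le_of_ne hnear hne]

end Approximation

section Triple

variable {β γ : ℝ} {m : ℤ}

theorem irrational_two_mul_sub_one (hβ : Irrational β) : Irrational (2 * β - 1) := by
  simpa using (hβ.natCast_mul (m := 2) two_ne_zero).sub_natCast 1

theorem mem_lowerValues_iff (hβ : Irrational β) :
    m ∈ lowerValues β ↔
      ∃ n : ℤ, 1 ≤ n ∧ Even (m + n) ∧ m < n * (2 * β - 1) ∧ n * (2 * β - 1) < m + 2 := by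
  have floor_iff (n : ℤ) (hn : 1 ≤ n) : m = 2 * ⌊(n : ℝ) * β⌋ - n ↔
      Even (m + n) ∧ m < n * (2 * β - 1) ∧ n * (2 * β - 1) < m + 2 := by
    have hne : (n : ℝ) * (2 * β - 1) ≠ m :=
      ((irrational_two_mul_sub_one hβ).intCast_mul (by omega)).ne_int m
    rw [eq_sub_iff_add_eq, eq_comm, two_mul_floor_eq_iff, ← hne.symm.le_iff_lt]
    push_cast
    refine and_congr_right fun _ => and_congr ?_ ?_ <;> constructor <;> intro h <;> linarith
  constructor
  · rintro ⟨n, hn, h⟩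
    exact ⟨n, by omega, (floor_iff n (by omega)).1 (by simpa using h)⟩
  · rintro ⟨n, hn, h⟩
    lift n to ℕ using by omega
    exact ⟨n, by omega, by simpa using (floor_iff n hn).2 h⟩

theorem mem_upperValues_iff_sub_two_mem_lowerValues :
    m ∈ upperValues β ↔ m - 2 ∈ lowerValues β := by
  simp only [upperValues, lowerValues, Set.mem_ofPred_eq, sub_eq_iff_eq_add]

theorem mem_upperValues_iff (hβ : Irrational β) :
    m ∈ upperValues β ↔
      ∃ n : ℤ, 1 ≤ n ∧ Even (m + n) ∧ m - 2 < n * (2 * β - 1) ∧ n * (2 * β - 1) < m := by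
  rw [mem_upperValues_iff_sub_two_mem_lowerValues, mem_lowerValues_iff hβ]
  push_cast
  simp only [sub_add_cancel, sub_add_eq_add_sub, Int.even_sub, even_two, iff_true]

theorem mem_lowerValues_union_upperValues_iff (hβ : Irrational β) :
    m ∈ lowerValues β ∪ upperValues β ↔
      ∃ n : ℤ, 1 ≤ n ∧ Even (m + n) ∧ |n * (2 * β - 1) - m| < 2 := by
  rw [Set.mem_union, mem_lowerValues_iff hβ, mem_upperValues_iff hβ, ← exists_or]
  refine exists_congr fun n => ?_
  rw [← and_or_left, ← and_or_left]
  refine and_congr_right fun hn => and_congr_right fun _ => ?_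
  have hne : (n : ℝ) * (2 * β - 1) ≠ m :=
    ((irrational_two_mul_sub_one hβ).intCast_mul (by omega)).ne_int m
  rw [abs_lt]
  constructor
  · rintro (⟨hlo, hhi⟩ | ⟨hlo, hhi⟩) <;> constructor <;> linarith
  · rintro ⟨hlo, hhi⟩
    rcases hne.lt_or_gt with h | h
    · exact Or.inr ⟨by linarith, h⟩
    · exact Or.inl ⟨h, by linarith⟩

theorem pos_of_mem_lowerValues_union_upperValues (hβ : Irrational β) (hβ' : 3 / 2 < β)
    (hm : m ∈ lowerValues β ∪ upperValues β) : 0 < m := by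
  obtain ⟨n, hn, -, habs⟩ := (mem_lowerValues_union_upperValues_iff hβ).1 hm
  have hn' : (1 : ℝ) ≤ n := by exact_mod_cast hn
  have hm' : (0 : ℝ) < m := by nlinarith [(abs_lt.1 habs).2]
  exact_mod_cast hm'

theorem disjoint_lowerValues_upperValues (hβ : Irrational β) (hβ' : 3 / 2 < β) :
    Disjoint (lowerValues β) (upperValues β) := by
  refine Set.disjoint_left.2 fun m hlower hupper => ?_
  obtain ⟨n, -, hn, hn_lo, hn_hi⟩ := (mem_lowerValues_iff hβ).1 hlower
  obtain ⟨p, -, hp, hp_lo, hp_hi⟩ := (mem_upperValues_iff hβ).1 hupper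
  have hnp : n = p := eq_of_abs_mul_sub_lt_two (s := 2 * β - 1) (by linarith) hn hp
    (abs_lt.2 ⟨by linarith, by linarith⟩) (abs_lt.2 ⟨by linarith, by linarith⟩)
  subst hnp
  linarith

theorem eq_four_mul_floor_add_iff (hβ : 3 / 2 < β) (hβγ : (2 * β - 3) * (2 * γ + 1) = 1)
    {k n : ℤ} (hm : m = 2 * n + k + 2) :
    m = 4 * ⌊(k : ℝ) * γ⌋ + 3 * k + 2 ↔
      Even (m + n) ∧ n * (2 * β - 1) ≤ m - 2 ∧ m + 2 < (n + 2) * (2 * β - 1) := by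
  have ht : 0 < 2 * β - 3 := by linarith
  have hγ : 2 * γ + 1 = 1 / (2 * β - 3) := by rw [eq_div_iff ht.ne', mul_comm, hβγ]
  have hfloor : m = 4 * ⌊(k : ℝ) * γ⌋ + 3 * k + 2 ↔ 2 * ⌊(k : ℝ) * γ⌋ = n - k := by omega
  have hkγ : 2 * ((k : ℝ) * γ) = k / (2 * β - 3) - k := by
    linear_combination (k : ℝ) * hγ
  rw [hfloor, two_mul_floor_eq_iff, hkγ]
  subst hm
  push_cast
  rw [sub_le_sub_iff_right, le_div_iff₀ ht, sub_add_eq_add_sub, sub_lt_sub_iff_right,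
    div_lt_iff₀ ht]
  refine and_congr (by grind) (and_congr ?_ ?_) <;> constructor <;> intro h <;> linarith

theorem mem_gapValues_iff (hβ : 3 / 2 < β) (hβγ : (2 * β - 3) * (2 * γ + 1) = 1) :
    m ∈ gapValues γ ↔
      0 < m ∧ ∃ n : ℤ, Even (m + n) ∧ n * (2 * β - 1) ≤ m - 2 ∧
        m + 2 < (n + 2) * (2 * β - 1) := by
  constructor
  · rintro ⟨k, hk⟩
    have hm : m = 2 * (2 * ⌊(k : ℝ) * γ⌋ + k) + (k : ℤ) + 2 := by omega
    have hgap := (eq_four_mul_floor_add_iff hβ hβγ hm).1 (by simpa using hk)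
    generalize 2 * ⌊(k : ℝ) * γ⌋ + (k : ℤ) = n at hm hgap
    have hn : -2 < n := by
      obtain ⟨-, -, hlt⟩ := hgap
      have hmul : (k : ℝ) < (n + 2) * (2 * β - 3) := by
        rw [hm] at hlt
        push_cast at hlt
        linarith
      have hn' : (0 : ℝ) < n + 2 :=
        pos_of_mul_pos_left (k.cast_nonneg.trans_lt hmul) (by linarith)
      have : (0 : ℤ) < n + 2 := by exact_mod_cast hn'
      omega
    exact ⟨by grind, n, hgap⟩
  · rintro ⟨hm, n, hgap⟩
    have hk : 0 ≤ m - 2 - 2 * n := by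
      rcases le_or_gt 0 n with hn | hn
      · have hn' : (0 : ℝ) ≤ n := by exact_mod_cast hn
        have : (0 : ℝ) ≤ m - 2 - 2 * n := by nlinarith [hgap.2.1]
        exact_mod_cast this
      · omega
    obtain ⟨k, hk⟩ := Int.eq_ofNat_of_zero_le hk
    exact ⟨k, by simpa using (eq_four_mul_floor_add_iff (k := k) hβ hβγ (by omega)).2 hgap⟩

theorem gapValues_eq_sdiff (hβ : Irrational β) (hβ' : 3 / 2 < β)
    (hβγ : (2 * β - 3) * (2 * γ + 1) = 1) :
    gapValues γ = {m | 0 < m} \ (lowerValues β ∪ upperValues β) := by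
  ext m
  rw [mem_gapValues_iff hβ' hβγ, Set.mem_sdiff, mem_lowerValues_union_upperValues_iff hβ]
  refine and_congr_right fun hm => ⟨?_, ?_⟩
  · rintro ⟨n, hn, hle, hlt⟩ ⟨p, -, hp, habs⟩
    exact not_abs_mul_sub_lt_two_of_gap (by linarith) hn hp hle hlt habs
  · exact (exists_abs_mul_sub_lt_two_or_gap (irrational_two_mul_sub_one hβ) (by linarith)
      hm).resolve_left

end Triple

section Language

variable {θ : ℝ}

theorem wordVal01_eq (S0 S1 : ℕ) {w : List ℤ} (hw : ∀ x ∈ w, x = 0 ∨ x = 1) :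
    (wordVal01 S0 S1 w : ℤ) = w.length * S0 - w.sum * (S0 - S1) := by
  induction w with
  | nil => simp [wordVal01]
  | cons a t ih =>
    have ih := ih fun x hx => hw x (List.mem_cons_of_mem _ hx)
    simp only [wordVal01] at ih ⊢
    push_cast at ih ⊢
    rcases hw a List.mem_cons_self with rfl | rfl
    · rw [List.count_cons_self, List.count_cons_of_ne zero_ne_one, List.length_cons, List.sum_cons]
      push_cast
      linarith
    · rw [List.count_cons_of_ne one_ne_zero, List.count_cons_self, List.length_cons, List.sum_cons]
      push_cast
      linarith

theorem charWord_eq_zero_or_one (hθ : θ ∈ Set.Ico (0 : ℝ) 1) (n : ℕ) :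
    charWord θ n = 0 ∨ charWord θ n = 1 := by
  have h := floor_add_eq_or ((n + 1) * θ) θ
  rw [Int.floor_eq_zero_iff.2 hθ, ← add_one_mul, add_assoc, one_add_one_eq_two] at h
  unfold charWord
  omega

theorem sum_range_prefixWord_charWord (hθ : θ ∈ Set.Ico (0 : ℝ) 1) (a : ℤ) {k : ℕ}
    (hk : 1 ≤ k) :
    ∑ j ∈ Finset.range k, prefixWord a (charWord θ) j = ⌊(k : ℝ) * θ⌋ + a := by
  obtain ⟨k, rfl⟩ := Nat.exists_eq_add_of_le' hk
  have htelescope := Finset.sum_range_sub (fun j : ℕ => ⌊((j : ℝ) + 1) * θ⌋) k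
  simp only [Nat.cast_add, Nat.cast_one, add_assoc, one_add_one_eq_two, Nat.cast_zero, zero_add,
    one_mul, Int.floor_eq_zero_iff.2 hθ, sub_zero] at htelescope
  simp [Finset.sum_range_succ', prefixWord, charWord, htelescope]

theorem sum_prefixWord_charWord_add_eq_or (hθ : θ ∈ Set.Ico (0 : ℝ) 1) {a : ℤ}
    (ha : a = 0 ∨ a = 1) (i : ℕ) {k : ℕ} (hk : 1 ≤ k) :
    ∑ j ∈ Finset.range k, prefixWord a (charWord θ) (i + j) = ⌊(k : ℝ) * θ⌋ ∨
      ∑ j ∈ Finset.range k, prefixWord a (charWord θ) (i + j) = ⌊(k : ℝ) * θ⌋ + 1 := by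
  have hsplit := Finset.sum_range_add (prefixWord a (charWord θ)) i k
  rw [sum_range_prefixWord_charWord hθ a (by omega)] at hsplit
  rcases i.eq_zero_or_pos with rfl | hi
  · simp only [zero_add, Finset.range_zero, Finset.sum_empty] at hsplit ⊢
    omega
  · rw [sum_range_prefixWord_charWord hθ a hi] at hsplit
    have hfloor := floor_add_eq_or (i * θ) (k * θ)
    rw [← add_mul, ← Nat.cast_add] at hfloor
    omega

theorem sum_map_range_eq_sum {M : Type*} [AddCommMonoid M] (f : ℕ → M) (k : ℕ) :
    ((List.range k).map f).sum = ∑ j ∈ Finset.range k, f j :=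
  rfl

theorem eq_zero_or_one_of_mem_of_mem_charLang (hθ : θ ∈ Set.Ico (0 : ℝ) 1) {w : List ℤ}
    (hw : w ∈ charLang θ) : ∀ x ∈ w, x = 0 ∨ x = 1 := by
  have letter {a : ℤ} (ha : a = 0 ∨ a = 1) (n : ℕ) :
      prefixWord a (charWord θ) n = 0 ∨ prefixWord a (charWord θ) n = 1 := by
    unfold prefixWord
    split_ifs
    · exact ha
    · exact charWord_eq_zero_or_one hθ _
  intro x hx
  rcases hw with ⟨-, i, h⟩ | ⟨-, i, h⟩ <;> rw [h] at hx <;>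
    obtain ⟨j, -, rfl⟩ := List.mem_map.1 hx
  · exact letter (Or.inl rfl) _
  · exact letter (Or.inr rfl) _

theorem exists_mem_charLang_length_sum_iff (hθ : θ ∈ Set.Ico (0 : ℝ) 1) {k : ℕ} {r : ℤ} :
    (∃ w ∈ charLang θ, w.length = k ∧ w.sum = r) ↔
      1 ≤ k ∧ (r = ⌊(k : ℝ) * θ⌋ ∨ r = ⌊(k : ℝ) * θ⌋ + 1) := by
  constructor
  · rintro ⟨w, hw, rfl, rfl⟩
    rcases hw with ⟨hne, i, h⟩ | ⟨hne, i, h⟩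
    all_goals
      have hlen : 1 ≤ w.length := List.length_pos_iff.2 hne
      have hsum := congrArg List.sum h
      rw [sum_map_range_eq_sum] at hsum
      rw [hsum]
    · exact ⟨hlen, sum_prefixWord_charWord_add_eq_or hθ (Or.inl rfl) i hlen⟩
    · exact ⟨hlen, sum_prefixWord_charWord_add_eq_or hθ (Or.inr rfl) i hlen⟩
  · rintro ⟨hk, h⟩
    have isFactor_take (f : ℕ → ℤ) : IsFactor f ((List.range k).map f) :=
      ⟨by simpa [List.range_eq_nil] using Nat.ne_of_gt hk, 0, by simp⟩
    rcases h with rfl | rfl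
    · refine ⟨_, Or.inl (isFactor_take _), by simp, ?_⟩
      rw [sum_map_range_eq_sum, sum_range_prefixWord_charWord hθ 0 hk, add_zero]
    · refine ⟨_, Or.inr (isFactor_take _), by simp, ?_⟩
      rw [sum_map_range_eq_sum, sum_range_prefixWord_charWord hθ 1 hk]

theorem exists_mem_charLang_wordVal01_eq_iff (hθ : θ ∈ Set.Ico (0 : ℝ) 1) (S0 S1 : ℕ) {v : ℤ} :
    (∃ w ∈ charLang θ, (wordVal01 S0 S1 w : ℤ) = v) ↔
      ∃ k : ℕ, 1 ≤ k ∧ (v = k * S0 - ⌊(k : ℝ) * θ⌋ * (S0 - S1) ∨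
        v = k * S0 - (⌊(k : ℝ) * θ⌋ + 1) * (S0 - S1)) := by
  constructor
  · rintro ⟨w, hw, rfl⟩
    rw [wordVal01_eq S0 S1 (eq_zero_or_one_of_mem_of_mem_charLang hθ hw)]
    obtain ⟨hlen, hsum⟩ := (exists_mem_charLang_length_sum_iff hθ).1 ⟨w, hw, rfl, rfl⟩
    exact ⟨w.length, hlen, hsum.imp (by rw [·]) (by rw [·])⟩
  · rintro ⟨k, hk, h⟩
    obtain ⟨r, hr, rfl⟩ : ∃ r, (r = ⌊(k : ℝ) * θ⌋ ∨ r = ⌊(k : ℝ) * θ⌋ + 1) ∧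
        v = k * S0 - r * (S0 - S1) :=
      h.elim (⟨_, Or.inl rfl, ·⟩) (⟨_, Or.inr rfl, ·⟩)
    obtain ⟨w, hw, rfl, rfl⟩ := (exists_mem_charLang_length_sum_iff hθ).2 ⟨hk, hr⟩
    exact ⟨w, hw, wordVal01_eq S0 S1 (eq_zero_or_one_of_mem_of_mem_charLang hθ hw)⟩

end Language

theorem floor_natCast_mul_two_sub {β : ℝ} (hβ : Irrational β) {k : ℕ} (hk : 1 ≤ k) :
    ⌊(k : ℝ) * (2 - β)⌋ = 2 * k - 1 - ⌊(k : ℝ) * β⌋ := by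
  have hirr : Irrational ((k : ℝ) * β) := hβ.natCast_mul (by omega)
  have hceil : ⌈(k : ℝ) * β⌉ = ⌊(k : ℝ) * β⌋ + 1 := by
    rw [Int.ceil_eq_floor_add_one_iff_notMem]
    rintro ⟨z, hz⟩
    exact hirr.ne_int z hz.symm
  have hsub : (k : ℝ) * (2 - β) = -(k * β) + (2 * k : ℤ) := by push_cast; ring
  rw [hsub, Int.floor_add_intCast, Int.floor_neg, hceil]
  ring

theorem wordVal01_three_one_image_charLang {β : ℝ} (hβ : Irrational β) (h1 : 1 < β) (h2 : β < 2) :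
    {m : ℕ | ∃ w ∈ charLang (2 - β), wordVal01 3 1 w = m} =
      {m : ℕ | (m : ℤ) ∈ lowerValues β ∪ upperValues β} := by
  ext m
  have hθ : 2 - β ∈ Set.Ico (0 : ℝ) 1 := ⟨by linarith, by linarith⟩
  have hval := exists_mem_charLang_wordVal01_eq_iff hθ 3 1 (v := m)
  simp only [Nat.cast_inj] at hval
  simp only [Set.mem_ofPred_eq, hval, lowerValues, upperValues, Set.mem_union, ← exists_or,
    ← and_or_left]
  refine exists_congr fun k => and_congr_right fun hk => ?_
  rw [floor_natCast_mul_two_sub hβ hk]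
  omega

theorem complementary_triple_two_general {β γ : ℝ} (hβ : Irrational β) (h_lo : 3 / 2 < β)
    (h_hi : β < 2) (hβγ : (2 * β - 3) * (2 * γ + 1) = 1) :
    ((Disjoint (lowerValues β) (upperValues β) ∧ Disjoint (lowerValues β) (gapValues γ) ∧
        Disjoint (upperValues β) (gapValues γ)) ∧
      lowerValues β ∪ upperValues β ∪ gapValues γ = {m | 0 < m}) ∧
    {m : ℕ | ∃ w ∈ charLang (2 - β), wordVal01 3 1 w = m} =
      {m : ℕ | (m : ℤ) ∈ lowerValues β ∪ upperValues β} ∧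
    {n : ℕ | 0 < n ∧ n ∉ {m : ℕ | ∃ w ∈ charLang (2 - β), wordVal01 3 1 w = m}} =
      {m : ℕ | (m : ℤ) ∈ gapValues γ} := by
  have hgap := gapValues_eq_sdiff hβ h_lo hβγ
  have hlang := wordVal01_three_one_image_charLang hβ (by linarith) h_hi
  have hdisj : Disjoint (lowerValues β ∪ upperValues β) (gapValues γ) :=
    hgap ▸ Set.disjoint_sdiff_right
  rw [Set.disjoint_union_left] at hdisj
  refine ⟨⟨⟨disjoint_lowerValues_upperValues hβ h_lo, hdisj⟩, ?_⟩, hlang, ?_⟩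
  · rw [hgap, Set.union_sdiff_cancel]
    exact fun m => pos_of_mem_lowerValues_union_upperValues hβ h_lo
  · rw [hlang, hgap]
    ext n
    simp

theorem irrational_Phi : Irrational Phi := Real.goldenRatio_irrational

theorem three_halves_lt_Phi : 3 / 2 < Phi := by
  have : (2 : ℝ) < √5 := Real.lt_sqrt_of_sq_lt (by norm_num)
  unfold Phi
  linarith

theorem Phi_lt_two : Phi < 2 := Real.goldenRatio_lt_two

theorem two_mul_Phi_sub_three_mul : (2 * Phi - 3) * (2 * Phi + 1) = 1 := by
  have Phi_sq : Phi ^ 2 = Phi + 1 := Real.goldenRatio_sq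
  linear_combination 4 * Phi_sq

theorem fibLang_eq_charLang : fibLang = charLang (2 - Phi) := rfl

theorem complementary_triple_two :
    ((Disjoint {m : ℤ | ∃ n : ℕ, 1 ≤ n ∧ m = 2 * ⌊(n : ℝ) * Phi⌋ - n}
               {m : ℤ | ∃ n : ℕ, 1 ≤ n ∧ m = 2 * ⌊(n : ℝ) * Phi⌋ - n + 2} ∧
      Disjoint {m : ℤ | ∃ n : ℕ, 1 ≤ n ∧ m = 2 * ⌊(n : ℝ) * Phi⌋ - n}
               {m : ℤ | ∃ n : ℕ, m = 4 * ⌊(n : ℝ) * Phi⌋ + 3 * n + 2} ∧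
      Disjoint {m : ℤ | ∃ n : ℕ, 1 ≤ n ∧ m = 2 * ⌊(n : ℝ) * Phi⌋ - n + 2}
               {m : ℤ | ∃ n : ℕ, m = 4 * ⌊(n : ℝ) * Phi⌋ + 3 * n + 2}) ∧
     {m : ℤ | ∃ n : ℕ, 1 ≤ n ∧ m = 2 * ⌊(n : ℝ) * Phi⌋ - n} ∪
       {m : ℤ | ∃ n : ℕ, 1 ≤ n ∧ m = 2 * ⌊(n : ℝ) * Phi⌋ - n + 2} ∪
       {m : ℤ | ∃ n : ℕ, m = 4 * ⌊(n : ℝ) * Phi⌋ + 3 * n + 2} =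
       {m : ℤ | 0 < m}) ∧
    {m : ℕ | ∃ w ∈ fibLang, wordVal01 3 1 w = m} =
      {m : ℕ | ∃ n : ℕ, 1 ≤ n ∧
        ((m : ℤ) = 2 * ⌊(n : ℝ) * Phi⌋ - n ∨ (m : ℤ) = 2 * ⌊(n : ℝ) * Phi⌋ - n + 2)} ∧
    {n : ℕ | 0 < n ∧ n ∉ {m : ℕ | ∃ w ∈ fibLang, wordVal01 3 1 w = m}} =
      {m : ℕ | ∃ n : ℕ, (m : ℤ) = 4 * ⌊(n : ℝ) * Phi⌋ + 3 * n + 2} := by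
  simpa only [fibLang_eq_charLang, lowerValues, upperValues, gapValues, Set.mem_union,
    Set.mem_ofPred_eq, ← exists_or, ← and_or_left] using
    complementary_triple_two_general irrational_Phi three_halves_lt_Phi Phi_lt_two
      two_mul_Phi_sub_three_mul
end
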